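/- Let f be a monic irreducible polynomial of degree n over a finite field F and let a ∈ G(f) be a nonzero sequence. Then the first n successive states s_0, s_1, …, s_{n−1} are linearly independent over F, where s_i = (a_i, a_{i+1}, …, a_{i+n−1}) ∈ F^n. -/

import Mathlib

open scoped Classical

/-- The left shift operator `L` on the space `V(F) = ℕ → F` of sequences over `F`. -/
def shiftOp (F : Type*) [Semiring F] : Module.End F (ℕ → F) :=
  LinearMap.funLeft F F (fun n => n + 1)

theorem shiftOp_pow_apply (F : Type*) [Field F] (i : ℕ) (a : ℕ → F) (k : ℕ) :
    ((shiftOp F) ^ i) a k = a (i + k) := by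
  induction i generalizing k with
  | zero => simp
  | succ i ih =>
    rw [pow_succ', Module.End.mul_apply]
    change ((shiftOp F) ^ i) a (k + 1) = _
    rw [ih]
    congr 1
    omega

theorem aeval_shiftOp_apply (F : Type*) [Field F] (p : Polynomial F) (a : ℕ → F) (k : ℕ) :
    Polynomial.aeval (shiftOp F) p a k
      = ∑ i ∈ Finset.range (p.natDegree + 1), p.coeff i * a (i + k) := by
  rw [Polynomial.aeval_eq_sum_range]
  simp [LinearMap.sum_apply, Finset.sum_apply, shiftOp_pow_apply]

theorem eq_zero_of_init (F : Type*) [Field F] (f : Polynomial F) (hf : f.Monic) (b : ℕ → F)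
    (hb : Polynomial.aeval (shiftOp F) f b = 0) (h0 : ∀ j < f.natDegree, b j = 0) : b = 0 := by
  funext k
  induction k using Nat.strong_induction_on with
  | _ k ih =>
    by_cases hk : k < f.natDegree
    · exact h0 k hk
    · have h := congrFun hb (k - f.natDegree)
      rw [aeval_shiftOp_apply, Finset.sum_range_succ, Finset.sum_eq_zero, hf.coeff_natDegree,
        Nat.add_sub_cancel' (by omega)] at h
      · simpa using h
      · intro i hi
        rw [Finset.mem_range] at hi
        rw [ih _ (by omega)]
        simp

/-- Let `f` be a monic irreducible polynomial of degree `n` over a finite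
field `F` and let `a ∈ G(f)` be a nonzero sequence.  Then the first `n` successive states
`sᵢ = (aᵢ, a_{i+1}, …, a_{i+n-1}) ∈ Fⁿ`, `0 ≤ i ≤ n-1`, are linearly independent over `F`. -/
theorem stmt5 (F : Type*) [Field F] [Fintype F] (n : ℕ) (f : Polynomial F)
    (hmonic : f.Monic) (hirr : Irreducible f) (hdeg : f.natDegree = n)
    (a : ℕ → F) (ha : a ≠ 0) (haf : Polynomial.aeval (shiftOp F) f a = 0) :
    LinearIndependent F (fun i : Fin n => fun j : Fin n => a ((i : ℕ) + (j : ℕ))) := by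
  rw [Fintype.linearIndependent_iff]
  intro c hc
  set g : Polynomial F := ∑ i : Fin n, Polynomial.monomial (i : ℕ) (c i) with hg
  have hcoeff : ∀ i : Fin n, g.coeff i = c i := by
    intro i
    simp [hg, Polynomial.finset_sum_coeff, Polynomial.coeff_monomial, Fin.val_inj]
  have hdg : g.degree < f.degree := by
    rw [Polynomial.degree_eq_natDegree hmonic.ne_zero, hdeg, Polynomial.degree_lt_iff_coeff_zero]
    intro m hm
    rw [hg, Polynomial.finset_sum_coeff]
    refine Finset.sum_eq_zero fun i _ => ?_
    rw [Polynomial.coeff_monomial, if_neg]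
    have := i.2
    omega
  have hga : Polynomial.aeval (shiftOp F) g a = 0 := by
    apply eq_zero_of_init F f hmonic
    · rw [← Module.End.mul_apply, ← map_mul, mul_comm, map_mul, Module.End.mul_apply, haf, map_zero]
    · intro j hj
      have h := congrFun hc ⟨j, hdeg ▸ hj⟩
      rw [hg, map_sum]
      simpa [LinearMap.sum_apply, Finset.sum_apply, Polynomial.aeval_monomial,
        shiftOp_pow_apply] using h
  by_contra hne
  have hg0 : g ≠ 0 := by
    intro h
    apply hne
    intro i
    rw [← hcoeff i, h, Polynomial.coeff_zero]
  have hcop : IsCoprime f g := by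
    rw [hirr.coprime_iff_not_dvd]
    intro hd
    exact absurd (Polynomial.degree_le_of_dvd hd hg0) (not_le.mpr hdg)
  obtain ⟨u, v, huv⟩ := hcop
  apply ha
  have h1 := congrArg (fun p => Polynomial.aeval (shiftOp F) p a) huv
  simpa [Module.End.mul_apply, haf, hga] using h1.symm
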